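/- arXiv:math/0703687 — 2 statements merged into one kernel-verified Lean document; each statement's English description precedes it below -/
import Mathlib

section
/- For K > 1, exp(π(K−1)) ≤ λ(K) ≤ exp(π(K−1/K)), where λ(K) = u²/(1−u²) with u = φ_K(1/√2). -/
noncomputable def ellK (r : ℝ) : ℝ :=
  ∫ θ in (0:ℝ)..(Real.pi/2), 1 / Real.sqrt (1 - r^2 * Real.sin θ ^ 2)

noncomputable def mu (r : ℝ) : ℝ :=
  (Real.pi/2) * ellK (Real.sqrt (1 - r^2)) / ellK r

noncomputable def muInv (y : ℝ) : ℝ := Function.invFunOn mu (Set.Ioo 0 1) y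

noncomputable def phi (K r : ℝ) : ℝ :=
  if r = 0 then 0 else if r = 1 then 1 else muInv (mu r / K)

/-!
In terms of the parameter `m = r ^ 2`, let `κ` be the complete elliptic integral of the first kind
and `ρ m = κ m / κ (1 - m)`. Then `mu r = π / (2 ρ (r ^ 2))`, so that `u = phi K (1 / √2)` satisfies
`ρ (u ^ 2) = K ρ (1 / 2) = K`. By Legendre's relation
`π ρ' m = (π / (2 κ (1 - m))) ^ 2 / (m (1 - m))`, where `1 / (m (1 - m))` is the derivative of
`logit m = log (m / (1 - m))`. Since `π / 2 ≤ κ (1 - m)`, the function `logit - π ρ` is monotone.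
Subtracting `ρ⁻¹` from `ρ` adds `(π / (2 κ m)) ^ 2` to the factor of `1 / (m (1 - m))`, which then
is at least `m + (1 - m) = 1`, so `π (ρ - ρ⁻¹) - logit` is monotone as well. Comparing the values
at `1 / 2` and `u ^ 2` gives both bounds.
-/

open Real Set Filter Topology MeasureTheory

theorem hasDerivAt_intervalIntegral_of_continuousOn {E : Type*} [NormedAddCommGroup E]
    [NormedSpace ℝ E] {F F' : ℝ → ℝ → E} {a b x₀ : ℝ} {U : Set ℝ} (hU : U ∈ 𝓝 x₀)
    (hF : ∀ x ∈ U, ContinuousOn (F x) (uIcc a b))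
    (hF' : ContinuousOn (Function.uncurry F') (U ×ˢ uIcc a b))
    (hd : ∀ x ∈ U, ∀ t ∈ uIcc a b, HasDerivAt (F · t) (F' x t) x) :
    HasDerivAt (fun x => ∫ t in a..b, F x t) (∫ t in a..b, F' x₀ t) x₀ := by
  obtain ⟨V, hV, hVU, hVc⟩ := local_compact_nhds hU
  obtain ⟨C, hC⟩ := (hVc.prod isCompact_uIcc).exists_bound_of_continuousOn
    (hF'.mono (prod_mono_left hVU))
  have hF'x₀ : ContinuousOn (F' x₀) (uIcc a b) :=
    hF'.comp (f := (x₀, ·)) (by fun_prop) fun _ ht => ⟨mem_of_mem_nhds hU, ht⟩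
  refine (intervalIntegral.hasDerivAt_integral_of_dominated_loc_of_deriv_le (bound := fun _ => C)
    hV ?_ (hF x₀ (mem_of_mem_nhds hU)).intervalIntegrable
    hF'x₀.intervalIntegrable.def'.aestronglyMeasurable ?_ (by simp) ?_).2
  · filter_upwards [hU] with x hx using (hF x hx).intervalIntegrable.def'.aestronglyMeasurable
  · exact .of_forall fun t ht x hx => hC (x, t) ⟨hx, uIoc_subset_uIcc ht⟩
  · exact .of_forall fun t ht x hx => hd x (hVU hx) t (uIoc_subset_uIcc ht)

theorem monotoneOn_of_hasDerivAt_nonneg {s : Set ℝ} (hs : Convex ℝ s) {f f' : ℝ → ℝ}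
    (hf : ∀ x ∈ s, HasDerivAt f (f' x) x) (hf' : ∀ x ∈ s, 0 ≤ f' x) : MonotoneOn f s :=
  monotoneOn_of_hasDerivWithinAt_nonneg hs
    (fun x hx => (hf x hx).continuousAt.continuousWithinAt)
    (fun x hx => (hf x (interior_subset hx)).hasDerivWithinAt)
    fun x hx => hf' x (interior_subset hx)

/-- The integral `∫₀^{π/2} (1 - m sin² θ) ^ p dθ`. The exponents `-1/2` and `1/2` give the complete
elliptic integrals of the first and second kind; the other exponents organise their derivatives.
The argument is the parameter `m = r ^ 2`, not the modulus `r`. -/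
noncomputable def ellipticIntegral (p m : ℝ) : ℝ :=
  ∫ θ in (0 : ℝ)..(π / 2), (1 - m * sin θ ^ 2) ^ p

/-- The complete elliptic integral of the first kind as a function of the parameter `m = r ^ 2`. -/
noncomputable def ellipticK (m : ℝ) : ℝ := ellipticIntegral (-1 / 2) m

/-- The complete elliptic integral of the second kind as a function of the parameter `m = r ^ 2`. -/
noncomputable def ellipticE (m : ℝ) : ℝ := ellipticIntegral (1 / 2) m

section EllipticIntegral

variable {p m : ℝ}

theorem one_sub_mul_sin_sq_pos (hm : m < 1) (θ : ℝ) : 0 < 1 - m * sin θ ^ 2 := by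
  rcases (sq_nonneg (sin θ)).eq_or_lt' with h | h
  · simp [h]
  · nlinarith [sin_sq_le_one θ]

theorem continuous_one_sub_mul_sin_sq_rpow (p : ℝ) (hm : m < 1) :
    Continuous fun θ => (1 - m * sin θ ^ 2) ^ p :=
  .rpow_const (by fun_prop) fun θ => .inl (one_sub_mul_sin_sq_pos hm θ).ne'

theorem ellipticIntegral_zero_right (p : ℝ) : ellipticIntegral p 0 = π / 2 := by
  simp [ellipticIntegral]

theorem ellipticIntegral_zero_left (m : ℝ) : ellipticIntegral 0 m = π / 2 := by
  simp [ellipticIntegral]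

theorem ellipticIntegral_pos (p : ℝ) (hm : m < 1) : 0 < ellipticIntegral p m :=
  intervalIntegral.intervalIntegral_pos_of_pos
    ((continuous_one_sub_mul_sin_sq_rpow p hm).intervalIntegrable _ _)
    (fun θ => rpow_pos_of_pos (one_sub_mul_sin_sq_pos hm θ) p) (by positivity)

theorem antitone_ellipticIntegral_left (h0 : 0 ≤ m) (hm : m < 1) :
    Antitone fun p => ellipticIntegral p m := fun p q hpq =>
  intervalIntegral.integral_mono (by positivity)
    ((continuous_one_sub_mul_sin_sq_rpow q hm).intervalIntegrable _ _)
    ((continuous_one_sub_mul_sin_sq_rpow p hm).intervalIntegrable _ _) fun θ =>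
      rpow_le_rpow_of_exponent_ge (one_sub_mul_sin_sq_pos hm θ)
        (sub_le_self _ (by positivity)) hpq

theorem ellipticIntegral_le_of_nonpos (hp : p ≤ 0) (h0 : 0 ≤ m) (hm : m < 1) :
    ellipticIntegral p m ≤ π / 2 * (1 - m) ^ p := by
  have hle : ellipticIntegral p m ≤ ∫ _ in (0 : ℝ)..(π / 2), (1 - m) ^ p :=
    intervalIntegral.integral_mono (by positivity)
      ((continuous_one_sub_mul_sin_sq_rpow p hm).intervalIntegrable _ _) (by simp) fun θ =>
        rpow_le_rpow_of_nonpos (sub_pos.2 hm)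
          (sub_le_sub_left (mul_le_of_le_one_right h0 (sin_sq_le_one θ)) 1) hp
  simpa using hle

theorem continuous_ellipticIntegral (hp : 0 ≤ p) : Continuous (ellipticIntegral p) :=
  intervalIntegral.continuous_parametric_intervalIntegral_of_continuous'
    (f := fun m θ => (1 - m * sin θ ^ 2) ^ p)
    (.rpow_const (by fun_prop) fun _ => .inr hp) _ _

theorem hasDerivAt_ellipticIntegral (p : ℝ) (hm : m < 1) :
    HasDerivAt (ellipticIntegral p)
      (∫ θ in (0 : ℝ)..(π / 2), -sin θ ^ 2 * p * (1 - m * sin θ ^ 2) ^ (p - 1)) m := by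
  refine hasDerivAt_intervalIntegral_of_continuousOn
    (F := fun m θ => (1 - m * sin θ ^ 2) ^ p)
    (F' := fun m θ => -sin θ ^ 2 * p * (1 - m * sin θ ^ 2) ^ (p - 1)) (Iio_mem_nhds hm)
    (fun x hx => (continuous_one_sub_mul_sin_sq_rpow p hx).continuousOn) ?_ fun x hx θ _ => ?_
  · exact .mul (by fun_prop) <| .rpow_const (by fun_prop) fun x hx =>
      .inl (one_sub_mul_sin_sq_pos hx.1 x.2).ne'
  · simpa using (((hasDerivAt_id x).mul_const (sin θ ^ 2)).const_sub 1).rpow_const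
      (p := p) (.inl (one_sub_mul_sin_sq_pos hx θ).ne')

theorem hasDerivAt_ellipticIntegral_of_ne_zero (p : ℝ) (h0 : m ≠ 0) (hm : m < 1) :
    HasDerivAt (ellipticIntegral p)
      (p * (ellipticIntegral p m - ellipticIntegral (p - 1) m) / m) m := by
  refine (hasDerivAt_ellipticIntegral p hm).congr_deriv ?_
  rw [eq_div_iff h0, ellipticIntegral, ellipticIntegral, ← intervalIntegral.integral_sub
    ((continuous_one_sub_mul_sin_sq_rpow p hm).intervalIntegrable _ _)
    ((continuous_one_sub_mul_sin_sq_rpow (p - 1) hm).intervalIntegrable _ _),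
    ← intervalIntegral.integral_mul_const, ← intervalIntegral.integral_const_mul]
  congr 1 with θ
  have hrpow : (1 - m * sin θ ^ 2) ^ p = (1 - m * sin θ ^ 2) ^ (p - 1) * (1 - m * sin θ ^ 2) := by
    rw [← rpow_add_one (one_sub_mul_sin_sq_pos hm θ).ne', sub_add_cancel]
  rw [hrpow]
  ring

theorem ellipticIntegral_recurrence (p : ℝ) (hm : m < 1) :
    (2 + 2 * p) * ellipticIntegral (p + 1) m - (2 - m) * (1 + 2 * p) * ellipticIntegral p m
      + 2 * p * (1 - m) * ellipticIntegral (p - 1) m = 0 := by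
  have hderiv (θ : ℝ) : HasDerivAt (fun θ => m * (sin θ * cos θ) * (1 - m * sin θ ^ 2) ^ p)
      ((2 + 2 * p) * (1 - m * sin θ ^ 2) ^ (p + 1)
        - (2 - m) * (1 + 2 * p) * (1 - m * sin θ ^ 2) ^ p
        + 2 * p * (1 - m) * (1 - m * sin θ ^ 2) ^ (p - 1)) θ := by
    have hpos := one_sub_mul_sin_sq_pos hm θ
    refine ((((hasDerivAt_sin θ).mul (hasDerivAt_cos θ)).const_mul m).mul
      (((((hasDerivAt_sin θ).pow 2).const_mul m).const_sub 1).rpow_const (p := p)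
        (.inl hpos.ne'))).congr_deriv ?_
    simp only [Pi.mul_apply, Pi.pow_apply, Nat.cast_ofNat]
    rw [rpow_add_one hpos.ne', rpow_sub_one hpos.ne']
    have := cos_sq' θ
    field_simp
    grind
  have hint (c q : ℝ) :
      IntervalIntegrable (fun θ => c * (1 - m * sin θ ^ 2) ^ q) volume 0 (π / 2) :=
    ((continuous_one_sub_mul_sin_sq_rpow q hm).const_mul c).intervalIntegrable _ _
  have key := intervalIntegral.integral_eq_sub_of_hasDerivAt (fun θ _ => hderiv θ)
    (((hint _ _).sub (hint _ _)).add (hint _ _))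
  rw [intervalIntegral.integral_add ((hint _ _).sub (hint _ _)) (hint _ _),
    intervalIntegral.integral_sub (hint _ _) (hint _ _)] at key
  simpa [ellipticIntegral] using key

theorem ellipticE_one : ellipticE 1 = 1 := by
  have h : EqOn (fun θ => (1 - 1 * sin θ ^ 2) ^ (1 / 2 : ℝ)) cos (uIcc 0 (π / 2)) := fun θ hθ => by
    rw [uIcc_of_le (by positivity)] at hθ
    have hcos : 0 ≤ cos θ := cos_nonneg_of_mem_Icc ⟨by linarith [hθ.1, pi_pos], hθ.2⟩
    simp only [one_mul, ← cos_sq', ← sqrt_eq_rpow, sqrt_sq hcos]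
  rw [ellipticE, ellipticIntegral, intervalIntegral.integral_congr h]
  simp

theorem ellipticK_pos (hm : m < 1) : 0 < ellipticK m := ellipticIntegral_pos _ hm

theorem pi_div_two_le_ellipticK (h0 : 0 ≤ m) (hm : m < 1) : π / 2 ≤ ellipticK m :=
  (ellipticIntegral_zero_left m).symm.trans_le
    (antitone_ellipticIntegral_left h0 hm (by norm_num : (-1 / 2 : ℝ) ≤ 0))

theorem ellipticK_le (h0 : 0 ≤ m) (hm : m < 1) : ellipticK m ≤ π / 2 / √(1 - m) := by
  have h := ellipticIntegral_le_of_nonpos (p := -1 / 2) (by norm_num) h0 hm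
  rwa [neg_div, rpow_neg (sub_pos.2 hm).le, ← sqrt_eq_rpow, ← div_eq_mul_inv, ← neg_div] at h

theorem hasDerivAt_ellipticE (h0 : m ≠ 0) (hm : m < 1) :
    HasDerivAt ellipticE ((ellipticE m - ellipticK m) / (2 * m)) m := by
  refine (hasDerivAt_ellipticIntegral_of_ne_zero (1 / 2) h0 hm).congr_deriv ?_
  rw [show (1 / 2 - 1 : ℝ) = -1 / 2 by norm_num, ← ellipticE, ← ellipticK]
  field_simp

theorem hasDerivAt_ellipticK (h0 : m ≠ 0) (hm : m < 1) :
    HasDerivAt ellipticK ((ellipticE m - (1 - m) * ellipticK m) / (2 * m * (1 - m))) m := by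
  have hm' : 1 - m ≠ 0 := (sub_pos.2 hm).ne'
  have hrec : ellipticE m = (1 - m) * ellipticIntegral (-1 / 2 - 1) m := by
    have h := ellipticIntegral_recurrence (-1 / 2) hm
    rw [show (-1 / 2 + 1 : ℝ) = 1 / 2 by norm_num, ← ellipticE] at h
    linarith
  refine (hasDerivAt_ellipticIntegral_of_ne_zero (-1 / 2) h0 hm).congr_deriv ?_
  rw [hrec, ← ellipticK]
  field_simp
  ring

theorem tendsto_mul_ellipticK_one_sub_nhdsGT_zero :
    Tendsto (fun m => m * ellipticK (1 - m)) (𝓝[>] 0) (𝓝 0) := by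
  have hlim : Tendsto (fun m => π / 2 * √m) (𝓝[>] 0) (𝓝 0) := by
    have : Continuous fun m => π / 2 * √m := by fun_prop
    simpa using (this.tendsto 0).mono_left nhdsWithin_le_nhds
  refine squeeze_zero' ?_ ?_ hlim <;>
    filter_upwards [Ioo_mem_nhdsGT one_pos] with m ⟨h0, h1⟩
  · exact mul_nonneg h0.le (ellipticK_pos (by linarith)).le
  · have h := ellipticK_le (m := 1 - m) (by linarith) (by linarith)
    rw [sub_sub_cancel] at h
    calc m * ellipticK (1 - m) ≤ m * (π / 2 / √m) := by gcongr
      _ = π / 2 * (m / √m) := by ring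
      _ = π / 2 * √m := by rw [div_sqrt]

/-- As `m → 0`, the factor `ellipticK (1 - m)` diverges, but it is `o(1 / m)` while
`ellipticE m - ellipticK m` is `O(m)`. -/
theorem tendsto_legendre_nhdsGT_zero :
    Tendsto (fun m => ellipticE m * ellipticK (1 - m) + ellipticE (1 - m) * ellipticK m
      - ellipticK m * ellipticK (1 - m)) (𝓝[>] 0) (𝓝 (π / 2)) := by
  have hK : HasDerivAt ellipticK _ 0 := hasDerivAt_ellipticIntegral (-1 / 2) one_pos
  have hE : HasDerivAt ellipticE _ 0 := hasDerivAt_ellipticIntegral (1 / 2) one_pos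
  have hEK : (fun m => ellipticE m - ellipticK m) =O[𝓝[>] 0] fun m => m := by
    have h := (hE.sub hK).isBigO_sub.mono (nhdsWithin_le_nhds (s := Ioi 0))
    simpa [ellipticE, ellipticK, ellipticIntegral_zero_right] using h
  have hdiff : Tendsto (fun m => (ellipticE m - ellipticK m) * ellipticK (1 - m)) (𝓝[>] 0) (𝓝 0) :=
    (hEK.mul (Asymptotics.isBigO_refl _ _)).trans_tendsto tendsto_mul_ellipticK_one_sub_nhdsGT_zero
  have hprod : Tendsto (fun m => ellipticE (1 - m) * ellipticK m) (𝓝[>] 0) (𝓝 (π / 2)) := by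
    have hcont : ContinuousAt (fun m => ellipticE (1 - m)) 0 :=
      ((continuous_ellipticIntegral (by norm_num)).comp (continuous_sub_left 1)).continuousAt
    have h := (hcont.mul hK.continuousAt).tendsto.mono_left (nhdsWithin_le_nhds (s := Ioi 0))
    simpa [Pi.mul_def, ellipticE_one, ellipticK, ellipticIntegral_zero_right] using h
  simpa only [zero_add] using (hdiff.add hprod).congr fun m => by ring

theorem legendre_relation (hm : m ∈ Ioo (0 : ℝ) 1) :
    ellipticE m * ellipticK (1 - m) + ellipticE (1 - m) * ellipticK m
      - ellipticK m * ellipticK (1 - m) = π / 2 := by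
  set W : ℝ → ℝ := fun m => ellipticE m * ellipticK (1 - m) + ellipticE (1 - m) * ellipticK m
    - ellipticK m * ellipticK (1 - m)
  have hderiv : ∀ x ∈ Ioo (0 : ℝ) 1, HasDerivAt W 0 x := fun x ⟨hx0, hx1⟩ => by
    have hx : 0 < 1 - x := sub_pos.2 hx1
    have hs : HasDerivAt (fun x : ℝ => 1 - x) (-1) x := (hasDerivAt_id x).const_sub 1
    have hK := hasDerivAt_ellipticK hx0.ne' hx1
    have hE := hasDerivAt_ellipticE hx0.ne' hx1
    have hK' := (hasDerivAt_ellipticK hx.ne' (by linarith)).comp x hs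
    have hE' := (hasDerivAt_ellipticE hx.ne' (by linarith)).comp x hs
    refine (((hE.mul hK').add (hE'.mul hK)).sub (hK.mul hK')).congr_deriv ?_
    simp only [Function.comp_apply, sub_sub_cancel]
    field_simp
    ring
  obtain ⟨c, hc⟩ := isOpen_Ioo.exists_is_const_of_deriv_eq_zero isPreconnected_Ioo
    (fun x hx => (hderiv x hx).differentiableAt.differentiableWithinAt)
    (fun x hx => (hderiv x hx).deriv)
  have hlim : Tendsto W (𝓝[>] 0) (𝓝 c) := by
    refine tendsto_const_nhds.congr' ?_
    filter_upwards [Ioo_mem_nhdsGT one_pos] with x hx using (hc x hx).symm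
  exact (hc m hm).trans (tendsto_nhds_unique hlim tendsto_legendre_nhdsGT_zero)

end EllipticIntegral

/-- The quotient `K / K'` of complementary elliptic integrals as a function of `m = r ^ 2`, the
reciprocal of `mu` up to the factor `π / 2`. Thus `phi K` multiplies it by `K`. -/
noncomputable def ellipticRatio (m : ℝ) : ℝ := ellipticK m / ellipticK (1 - m)

/-- The log-odds of `m`. The dilatation bound `u ^ 2 / (1 - u ^ 2)` is `exp (logit (u ^ 2))`. -/
noncomputable def logit (m : ℝ) : ℝ := log (m / (1 - m))

section EllipticRatio

variable {m : ℝ}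

theorem logit_half : logit (1 / 2) = 0 := by norm_num [logit]

theorem exp_logit (hm : m ∈ Ioo (0 : ℝ) 1) : exp (logit m) = m / (1 - m) :=
  exp_log (div_pos hm.1 (sub_pos.2 hm.2))

theorem hasDerivAt_logit (hm : m ∈ Ioo (0 : ℝ) 1) : HasDerivAt logit (1 / (m * (1 - m))) m := by
  have h0 : m ≠ 0 := hm.1.ne'
  have h1 : 1 - m ≠ 0 := (sub_pos.2 hm.2).ne'
  refine (((hasDerivAt_id m).div ((hasDerivAt_id m).const_sub 1) h1).log
    (div_ne_zero h0 h1)).congr_deriv ?_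
  simp only [id, Pi.div_apply]
  field_simp
  ring

theorem tendsto_logit_nhdsLT_one : Tendsto logit (𝓝[<] 1) atTop := by
  have hsub : Tendsto (fun m : ℝ => 1 - m) (𝓝[<] 1) (𝓝[>] 0) := by
    simpa using (continuous_sub_left (1 : ℝ)).continuousWithinAt.tendsto_nhdsWithin (x := 1)
      fun m (hm : m ∈ Iio 1) => mem_Ioi.2 (sub_pos.2 (mem_Iio.1 hm))
  exact tendsto_log_atTop.comp <|
    (tendsto_id.mono_left nhdsWithin_le_nhds).pos_mul_atTop one_pos hsub.inv_tendsto_nhdsGT_zero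

theorem ellipticRatio_pos (hm : m ∈ Ioo (0 : ℝ) 1) : 0 < ellipticRatio m :=
  div_pos (ellipticK_pos hm.2) (ellipticK_pos (sub_lt_self 1 hm.1))

theorem ellipticRatio_one_sub (m : ℝ) : ellipticRatio (1 - m) = (ellipticRatio m)⁻¹ := by
  rw [ellipticRatio, ellipticRatio, sub_sub_cancel, inv_div]

theorem ellipticRatio_half : ellipticRatio (1 / 2) = 1 := by
  rw [ellipticRatio, sub_half, div_self (ellipticK_pos (by norm_num)).ne']

theorem hasDerivAt_ellipticRatio (hm : m ∈ Ioo (0 : ℝ) 1) :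
    HasDerivAt ellipticRatio (π / (4 * m * (1 - m) * ellipticK (1 - m) ^ 2)) m := by
  have h1 : 0 < 1 - m := sub_pos.2 hm.2
  have hK'pos := ellipticK_pos (sub_lt_self 1 hm.1)
  have hK' := (hasDerivAt_ellipticK h1.ne' (sub_lt_self 1 hm.1)).comp m
    ((hasDerivAt_id m).const_sub 1)
  refine ((hasDerivAt_ellipticK hm.1.ne' hm.2).div hK' hK'pos.ne').congr_deriv ?_
  have h0 := hm.1
  rw [show π = 2 * (π / 2) by ring, ← legendre_relation hm]
  simp only [Function.comp_apply, sub_sub_cancel]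
  field_simp
  ring

theorem monotoneOn_ellipticRatio : MonotoneOn ellipticRatio (Ioo 0 1) :=
  monotoneOn_of_hasDerivAt_nonneg (convex_Ioo 0 1) (fun _ => hasDerivAt_ellipticRatio)
    fun m ⟨h0, h1⟩ => by
      have : 0 < 1 - m := sub_pos.2 h1
      positivity

theorem monotoneOn_logit_sub_pi_mul_ellipticRatio :
    MonotoneOn (fun m => logit m - π * ellipticRatio m) (Ioo 0 1) := by
  refine monotoneOn_of_hasDerivAt_nonneg (convex_Ioo 0 1) (fun m hm =>
    (hasDerivAt_logit hm).sub ((hasDerivAt_ellipticRatio hm).const_mul π)) fun m ⟨h0, h1⟩ => ?_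
  have hm' : 0 < 1 - m := sub_pos.2 h1
  have hK := ellipticK_pos (sub_lt_self 1 h0)
  have hle : (π / (2 * ellipticK (1 - m))) ^ 2 ≤ 1 := by
    refine pow_le_one₀ (by positivity) ((div_le_one (by positivity)).2 ?_)
    linarith [pi_div_two_le_ellipticK hm'.le (sub_lt_self 1 h0)]
  calc 0 ≤ 1 / (m * (1 - m)) * (1 - (π / (2 * ellipticK (1 - m))) ^ 2) :=
        mul_nonneg (by positivity) (sub_nonneg.2 hle)
    _ = _ := by field_simp; ring

theorem one_sub_le_sq_pi_div_two_mul_ellipticK (h0 : 0 ≤ m) (h1 : m < 1) :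
    1 - m ≤ (π / (2 * ellipticK m)) ^ 2 := by
  have hm : 0 < 1 - m := sub_pos.2 h1
  have hK := ellipticK_pos h1
  have h := ellipticK_le h0 h1
  rw [le_div_iff₀ (sqrt_pos.2 hm)] at h
  rw [← sqrt_le_left (by positivity), le_div_iff₀ (by positivity)]
  linarith

theorem monotoneOn_pi_mul_ellipticRatio_sub_inv_sub_logit :
    MonotoneOn (fun m => π * (ellipticRatio m - (ellipticRatio m)⁻¹) - logit m) (Ioo 0 1) := by
  refine monotoneOn_of_hasDerivAt_nonneg (convex_Ioo 0 1) (fun m hm =>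
    (((hasDerivAt_ellipticRatio hm).sub ((hasDerivAt_ellipticRatio hm).inv
      (ellipticRatio_pos hm).ne')).const_mul π).sub (hasDerivAt_logit hm)) fun m ⟨h0, h1⟩ => ?_
  have hm' : 0 < 1 - m := sub_pos.2 h1
  have hK := ellipticK_pos h1
  have hK' := ellipticK_pos (sub_lt_self 1 h0)
  have hle : 1 ≤ (π / (2 * ellipticK m)) ^ 2 + (π / (2 * ellipticK (1 - m))) ^ 2 := by
    linarith [one_sub_le_sq_pi_div_two_mul_ellipticK h0.le h1,
      one_sub_le_sq_pi_div_two_mul_ellipticK hm'.le (sub_lt_self 1 h0)]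
  calc 0 ≤ 1 / (m * (1 - m)) *
          ((π / (2 * ellipticK m)) ^ 2 + (π / (2 * ellipticK (1 - m))) ^ 2 - 1) :=
        mul_nonneg (by positivity) (sub_nonneg.2 hle)
    _ = _ := by rw [ellipticRatio]; field_simp; ring

theorem pi_mul_ellipticRatio_sub_one_le_logit (hm : m ∈ Ico (1 / 2 : ℝ) 1) :
    π * (ellipticRatio m - 1) ≤ logit m := by
  have h := monotoneOn_logit_sub_pi_mul_ellipticRatio (a := 1 / 2) (by norm_num)
    ⟨one_half_pos.trans_le hm.1, hm.2⟩ hm.1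
  simp only [logit_half, ellipticRatio_half] at h
  linarith

theorem logit_le_pi_mul_ellipticRatio_sub_inv (hm : m ∈ Ico (1 / 2 : ℝ) 1) :
    logit m ≤ π * (ellipticRatio m - (ellipticRatio m)⁻¹) := by
  have h := monotoneOn_pi_mul_ellipticRatio_sub_inv_sub_logit (a := 1 / 2) (by norm_num)
    ⟨one_half_pos.trans_le hm.1, hm.2⟩ hm.1
  simp only [logit_half, ellipticRatio_half] at h
  linarith

theorem tendsto_ellipticRatio_nhdsLT_one : Tendsto ellipticRatio (𝓝[<] 1) atTop := by
  refine tendsto_atTop_mono' _ ?_ (tendsto_logit_nhdsLT_one.atTop_div_const pi_pos)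
  filter_upwards [Ico_mem_nhdsLT (one_half_lt_one (α := ℝ))] with m hm
  have hinv := inv_pos.2 (ellipticRatio_pos ⟨one_half_pos.trans_le hm.1, hm.2⟩)
  refine (div_le_iff₀' pi_pos).2 ((logit_le_pi_mul_ellipticRatio_sub_inv hm).trans ?_)
  gcongr
  linarith

theorem tendsto_ellipticRatio_nhdsGT_zero : Tendsto ellipticRatio (𝓝[>] 0) (𝓝 0) := by
  have hsub : Tendsto (fun m : ℝ => 1 - m) (𝓝[>] 0) (𝓝[<] 1) := by
    simpa using (continuous_sub_left (1 : ℝ)).continuousWithinAt.tendsto_nhdsWithin (x := 0)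
      fun m (hm : m ∈ Ioi 0) => mem_Iio.2 (sub_lt_self 1 (mem_Ioi.1 hm))
  refine (tendsto_ellipticRatio_nhdsLT_one.comp hsub).inv_tendsto_atTop.congr fun m => ?_
  simp [ellipticRatio_one_sub]

theorem surjOn_ellipticRatio : SurjOn ellipticRatio (Ioo 0 1) (Ioi 0) :=
  isPreconnected_Ioo.intermediate_value_Ioi
    (le_principal_iff.2 (Ioo_mem_nhdsGT one_pos)) (le_principal_iff.2 (Ioo_mem_nhdsLT one_pos))
    (fun _ hm => (hasDerivAt_ellipticRatio hm).continuousAt.continuousWithinAt)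
    tendsto_ellipticRatio_nhdsGT_zero tendsto_ellipticRatio_nhdsLT_one

end EllipticRatio

section Phi

variable {r K : ℝ}

theorem ellK_eq_ellipticK_sq (hr : r ^ 2 ≤ 1) : ellK r = ellipticK (r ^ 2) := by
  rw [ellK, ellipticK, ellipticIntegral]
  congr 1 with θ
  have hnonneg : 0 ≤ 1 - r ^ 2 * sin θ ^ 2 :=
    sub_nonneg.2 (mul_le_one₀ hr (sq_nonneg _) (sin_sq_le_one θ))
  rw [neg_div, rpow_neg hnonneg, ← sqrt_eq_rpow, one_div]

theorem mu_eq_pi_div_two_div_ellipticRatio (hr : r ^ 2 ≤ 1) :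
    mu r = π / 2 / ellipticRatio (r ^ 2) := by
  have hsq : √(1 - r ^ 2) ^ 2 = 1 - r ^ 2 := sq_sqrt (sub_nonneg.2 hr)
  have hle : √(1 - r ^ 2) ^ 2 ≤ 1 := hsq.trans_le (sub_le_self 1 (sq_nonneg r))
  rw [mu, ellK_eq_ellipticK_sq hr, ellK_eq_ellipticK_sq hle, hsq, ellipticRatio,
    div_div_eq_mul_div]

theorem sq_mem_Ioo (hr : r ∈ Ioo (0 : ℝ) 1) : r ^ 2 ∈ Ioo (0 : ℝ) 1 :=
  ⟨pow_pos hr.1 2, pow_lt_one₀ hr.1.le hr.2 two_ne_zero⟩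

theorem mu_pos (hr : r ∈ Ioo (0 : ℝ) 1) : 0 < mu r := by
  rw [mu_eq_pi_div_two_div_ellipticRatio (sq_mem_Ioo hr).2.le]
  exact div_pos pi_div_two_pos (ellipticRatio_pos (sq_mem_Ioo hr))

theorem surjOn_mu : SurjOn mu (Ioo 0 1) (Ioi 0) := fun y hy => by
  obtain ⟨m, ⟨h0, h1⟩, hm⟩ := surjOn_ellipticRatio (div_pos pi_div_two_pos hy)
  have hsq : √m ^ 2 = m := sq_sqrt h0.le
  refine ⟨√m, ⟨sqrt_pos.2 h0, (sqrt_lt' one_pos).2 (by simpa using h1)⟩, ?_⟩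
  rw [mu_eq_pi_div_two_div_ellipticRatio (hsq.trans_le h1.le), hsq, hm,
    div_div_cancel₀ pi_div_two_pos.ne']

theorem phi_eq_muInv (hr : r ∈ Ioo (0 : ℝ) 1) : phi K r = muInv (mu r / K) := by
  rw [phi, if_neg hr.1.ne', if_neg hr.2.ne]

theorem phi_mem_Ioo (hK : 0 < K) (hr : r ∈ Ioo (0 : ℝ) 1) : phi K r ∈ Ioo (0 : ℝ) 1 := by
  rw [phi_eq_muInv hr]
  exact surjOn_mu.mapsTo_invFunOn (div_pos (mu_pos hr) hK)

theorem mu_phi (hK : 0 < K) (hr : r ∈ Ioo (0 : ℝ) 1) : mu (phi K r) = mu r / K := by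
  rw [phi_eq_muInv hr]
  exact surjOn_mu.rightInvOn_invFunOn (div_pos (mu_pos hr) hK)

theorem ellipticRatio_phi_sq (hK : 0 < K) (hr : r ∈ Ioo (0 : ℝ) 1) :
    ellipticRatio (phi K r ^ 2) = K * ellipticRatio (r ^ 2) := by
  have hr2 := sq_mem_Ioo hr
  have hφ2 := sq_mem_Ioo (phi_mem_Ioo hK hr)
  have hpos := ellipticRatio_pos hr2
  have hφpos := ellipticRatio_pos hφ2
  have h := mu_phi hK hr
  rw [mu_eq_pi_div_two_div_ellipticRatio hφ2.2.le,
    mu_eq_pi_div_two_div_ellipticRatio hr2.2.le] at h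
  field_simp at h
  rw [← h, mul_comm]

end Phi

theorem lambda_bounds (K : ℝ) (hK : 1 < K) :
    Real.exp (Real.pi * (K - 1)) ≤
      (phi K (1 / Real.sqrt 2))^2 / (1 - (phi K (1 / Real.sqrt 2))^2) ∧
    (phi K (1 / Real.sqrt 2))^2 / (1 - (phi K (1 / Real.sqrt 2))^2) ≤
      Real.exp (Real.pi * (K - 1/K)) := by
  have hsq : (1 / √2) ^ 2 = 1 / 2 := by simp
  have hr : 1 / √2 ∈ Ioo (0 : ℝ) 1 :=
    ⟨by positivity, (sq_lt_one_iff₀ (by positivity)).1 (by norm_num [hsq])⟩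
  have hK0 : 0 < K := one_pos.trans hK
  have hu := sq_mem_Ioo (phi_mem_Ioo hK0 hr)
  have hratio : ellipticRatio (phi K (1 / √2) ^ 2) = K := by
    rw [ellipticRatio_phi_sq hK0 hr, hsq, ellipticRatio_half, mul_one]
  have hhalf : 1 / 2 < phi K (1 / √2) ^ 2 :=
    monotoneOn_ellipticRatio.reflect_lt (by norm_num) hu (by rwa [ellipticRatio_half, hratio])
  have hlower := pi_mul_ellipticRatio_sub_one_le_logit ⟨hhalf.le, hu.2⟩
  have hupper := logit_le_pi_mul_ellipticRatio_sub_inv ⟨hhalf.le, hu.2⟩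
  rw [hratio] at hlower hupper
  rw [← exp_logit hu, one_div K]
  exact ⟨exp_le_exp.2 hlower, exp_le_exp.2 hupper⟩
end

section
/- For 0 < a ≤ 1/2 and r, s ∈ (0,1): μ_a(r) + μ_a(s) ≤ 2·μ_a(√(2rs/(1+rs+r's'))) ≤ 2·μ_a(√(rs)), where r' = √(1−r²), s' = √(1−s²), with equality when r = s. -/
noncomputable def GaussF (a b c x : ℝ) : ℝ :=
  ∑' n : ℕ, ((ascPochhammer ℝ n).eval a * (ascPochhammer ℝ n).eval b /
    ((ascPochhammer ℝ n).eval c * n.factorial)) * x ^ n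

noncomputable def muA (a r : ℝ) : ℝ :=
  (Real.pi / (2 * Real.sin (Real.pi * a))) *
    GaussF a (1-a) 1 (1 - r^2) / GaussF a (1-a) 1 (r^2)

/-!
Write `K(x) = F(a, 1 - a; 1; x)`. By Legendre's relation, `K(1 - x) / K(x)` has derivative
`-C / (x (1 - x) K(x) ^ 2)` with a constant `C > 0`. In the parameter `t` with `r = 1 / cosh t`
this makes the derivative of `μ_a` a positive multiple of `1 / (√(1 - r ^ 2) K(r ^ 2) ^ 2)`.
Since `(1 - x) K'(x) = a (1 - a) F(a, 1 - a; 2; x) ≤ K(x) / 4`, the function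
`√(1 - x) K(x) ^ 2` is decreasing, so `μ_a` is concave in `t`. The first inequality is concavity at
the midpoint: if `r = 1 / cosh x` and `s = 1 / cosh y`, then `1 / cosh ((x + y) / 2)` is
`√(2 r s / (1 + r s + r' s'))`. The second one is `cosh ((x + y) / 2) ^ 2 ≤ cosh x cosh y`, as `μ_a`
is decreasing.
-/

open Set Real

section PowerSeries

variable {𝕜 F : Type*} [NontriviallyNormedField 𝕜] [NormedAddCommGroup F] [NormedSpace 𝕜 F]
  [CompleteSpace F]

theorem hasSum_deriv_of_hasFPowerSeriesOnBall {f : 𝕜 → F} {p : FormalMultilinearSeries 𝕜 𝕜 F}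
    {r : ENNReal} (hf : HasFPowerSeriesOnBall f p 0 r) {x : 𝕜} (hx : x ∈ Metric.eball 0 r) :
    HasSum (fun n => x ^ n • (n + 1) • p.coeff (n + 1)) (deriv f x) := by
  have h := (hf.fderiv.hasSum hx).mapL (ContinuousLinearMap.apply 𝕜 F 1)
  simpa using h

end PowerSeries

section Coefficients

variable {𝕂 : Type*} [Field 𝕂] {a b c : 𝕂}

theorem succ_mul_ordinaryHypergeometricCoefficient_succ [CharZero 𝕂] {n : ℕ} (hc : c + n ≠ 0) :
    (n + 1) * ordinaryHypergeometricCoefficient a b c (n + 1) =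
      (a + n) * (b + n) / (c + n) * ordinaryHypergeometricCoefficient a b c n := by
  have hn : (n + 1 : 𝕂) ≠ 0 := n.cast_add_one_ne_zero
  have hfact : (n.factorial : 𝕂) ≠ 0 := Nat.cast_ne_zero.2 n.factorial_ne_zero
  simp only [ordinaryHypergeometricCoefficient, ascPochhammer_succ_eval, Nat.factorial_succ,
    Nat.cast_mul, Nat.cast_add, Nat.cast_one, mul_inv]
  field_simp

theorem ordinaryHypergeometricCoefficient_add_one (hc : ∀ n : ℕ, c + n ≠ 0) (n : ℕ) :
    ordinaryHypergeometricCoefficient a b (c + 1) n =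
      c / (c + n) * ordinaryHypergeometricCoefficient a b c n := by
  have hc0 : c ≠ 0 := by simpa using hc 0
  have hshift : c * (ascPochhammer 𝕂 n).eval (c + 1) = (ascPochhammer 𝕂 n).eval c * (c + n) := by
    rw [← ascPochhammer_succ_eval, ascPochhammer_succ_left]
    simp
  have hinv : ((ascPochhammer 𝕂 n).eval (c + 1))⁻¹ =
      c / (c + n) * ((ascPochhammer 𝕂 n).eval c)⁻¹ := by
    rw [eq_div_of_mul_eq hc0 ((mul_comm _ _).trans hshift), inv_div, div_mul_eq_mul_div,
      div_eq_mul_inv, mul_inv]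
    ring
  rw [ordinaryHypergeometricCoefficient, hinv, ordinaryHypergeometricCoefficient]
  ring

theorem ordinaryHypergeometricCoefficient_pos [LinearOrder 𝕂] [IsStrictOrderedRing 𝕂] (ha : 0 < a)
    (hb : 0 < b) (hc : 0 < c) (n : ℕ) : 0 < ordinaryHypergeometricCoefficient a b c n := by
  have ha' := ascPochhammer_pos n a ha
  have hb' := ascPochhammer_pos n b hb
  have hc' := ascPochhammer_pos n c hc
  unfold ordinaryHypergeometricCoefficient
  positivity

theorem one_le_radius_ordinaryHypergeometricSeries {𝕂 : Type*} (𝔸 : Type*) [RCLike 𝕂]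
    [NormedDivisionRing 𝔸] [NormedAlgebra 𝕂 𝔸] (a b c : 𝕂) :
    1 ≤ (ordinaryHypergeometricSeries 𝔸 a b c).radius := by
  by_cases h : ∀ k : ℕ, (k : 𝕂) ≠ -a ∧ (k : 𝕂) ≠ -b ∧ (k : 𝕂) ≠ -c
  · exact (ordinaryHypergeometricSeries_radius_eq_one 𝔸 a b c h).ge
  · obtain ⟨k, hk⟩ := not_forall.1 h
    have hk' : a = -k ∨ b = -k ∨ c = -k := by grind
    rcases hk' with rfl | rfl | rfl
    · simp [ordinaryHypergeometric_radius_top_of_neg_nat₁]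
    · simp [ordinaryHypergeometric_radius_top_of_neg_nat₂]
    · simp [ordinaryHypergeometric_radius_top_of_neg_nat₃]

end Coefficients

section GaussF

variable {a b c x : ℝ}

theorem GaussF_eq_ordinaryHypergeometric (a b c : ℝ) :
    GaussF a b c = ordinaryHypergeometric a b c := by
  funext x
  rw [GaussF, ordinaryHypergeometric_eq_tsum]
  exact tsum_congr fun n => by rw [smul_eq_mul, div_eq_mul_inv, mul_inv]; ring

theorem hasFPowerSeriesOnBall_GaussF (a b c : ℝ) :
    HasFPowerSeriesOnBall (GaussF a b c) (ordinaryHypergeometricSeries ℝ a b c) 0 1 := by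
  have hradius := one_le_radius_ordinaryHypergeometricSeries ℝ a b c
  rw [GaussF_eq_ordinaryHypergeometric]
  exact (FormalMultilinearSeries.hasFPowerSeriesOnBall _ (one_pos.trans_le hradius)).mono
    one_pos hradius

theorem mem_eball_zero_one_iff {E : Type*} [SeminormedAddGroup E] {x : E} :
    x ∈ Metric.eball 0 1 ↔ ‖x‖ < 1 := by
  rw [← ENNReal.ofReal_one, Metric.eball_ofReal, mem_ball_zero_iff]

theorem hasSum_GaussF (hx : |x| < 1) :
    HasSum (fun n => ordinaryHypergeometricCoefficient a b c n * x ^ n) (GaussF a b c x) := by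
  have h := (hasFPowerSeriesOnBall_GaussF a b c).hasSum (mem_eball_zero_one_iff.2 hx)
  simpa only [ordinaryHypergeometricSeries_apply_eq, zero_add, smul_eq_mul] using h

theorem differentiableAt_GaussF (hx : |x| < 1) : DifferentiableAt ℝ (GaussF a b c) x :=
  (hasFPowerSeriesOnBall_GaussF a b c).differentiableOn.differentiableAt
    (Metric.isOpen_eball.mem_nhds (mem_eball_zero_one_iff.2 hx))

theorem hasSum_deriv_GaussF (hx : |x| < 1) :
    HasSum (fun n : ℕ => (n + 1) * ordinaryHypergeometricCoefficient a b c (n + 1) * x ^ n)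
      (deriv (GaussF a b c) x) := by
  refine (hasSum_deriv_of_hasFPowerSeriesOnBall (hasFPowerSeriesOnBall_GaussF a b c)
    (mem_eball_zero_one_iff.2 hx)).congr_fun fun n => ?_
  rw [ordinaryHypergeometricSeries, FormalMultilinearSeries.coeff_ofScalars, nsmul_eq_mul,
    smul_eq_mul]
  push_cast
  ring

theorem hasSum_mul_deriv_GaussF (hx : |x| < 1) :
    HasSum (fun n : ℕ => n * ordinaryHypergeometricCoefficient a b c n * x ^ n)
      (x * deriv (GaussF a b c) x) := by
  rw [← hasSum_nat_add_iff' 1, Finset.sum_range_one, Nat.cast_zero, zero_mul, zero_mul, sub_zero]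
  refine ((hasSum_deriv_GaussF hx).mul_left x).congr_fun fun n => ?_
  push_cast
  ring

theorem mul_deriv_GaussF_add_one (hc : ∀ n : ℕ, c + n ≠ 0) (hx : |x| < 1) :
    x * deriv (GaussF a b (c + 1)) x = c * (GaussF a b c x - GaussF a b (c + 1) x) := by
  refine (hasSum_mul_deriv_GaussF hx).unique
    (((hasSum_GaussF hx).sub (hasSum_GaussF hx)).mul_left c |>.congr_fun fun n => ?_)
  have := hc n
  rw [ordinaryHypergeometricCoefficient_add_one hc]
  field_simp
  ring

theorem one_sub_mul_deriv_GaussF (hc : ∀ n : ℕ, c + n ≠ 0) (hx : |x| < 1) :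
    (1 - x) * deriv (GaussF a b c) x =
      (a + b - c) * GaussF a b c x + (c - a) * (c - b) / c * GaussF a b (c + 1) x := by
  have hc0 : c ≠ 0 := by simpa using hc 0
  rw [one_sub_mul]
  refine ((hasSum_deriv_GaussF hx).sub (hasSum_mul_deriv_GaussF hx)).unique
    ((((hasSum_GaussF hx).mul_left _).add ((hasSum_GaussF hx).mul_left _)).congr_fun fun n => ?_)
  have := hc n
  rw [succ_mul_ordinaryHypergeometricCoefficient_succ this,
    ordinaryHypergeometricCoefficient_add_one hc]
  field_simp
  ring

end GaussF

section Positivity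

variable {a b c x : ℝ}

theorem GaussF_pos (ha : 0 < a) (hb : 0 < b) (hc : 0 < c) (hx : x ∈ Ico 0 1) :
    0 < GaussF a b c x := by
  have hsum := hasSum_GaussF (a := a) (b := b) (c := c) ((abs_of_nonneg hx.1).trans_lt hx.2)
  have hterm (n : ℕ) : 0 ≤ ordinaryHypergeometricCoefficient a b c n * x ^ n :=
    mul_nonneg (ordinaryHypergeometricCoefficient_pos ha hb hc n).le (pow_nonneg hx.1 n)
  have hle := le_hasSum hsum 0 fun n _ => hterm n
  exact one_pos.trans_le (by simpa [ordinaryHypergeometricCoefficient] using hle)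

theorem GaussF_add_one_le (ha : 0 < a) (hb : 0 < b) (hc : 0 < c) (hx : x ∈ Ico 0 1) :
    GaussF a b (c + 1) x ≤ GaussF a b c x := by
  have hx' : |x| < 1 := (abs_of_nonneg hx.1).trans_lt hx.2
  refine hasSum_le (fun n => ?_) (hasSum_GaussF hx') (hasSum_GaussF hx')
  rw [ordinaryHypergeometricCoefficient_add_one fun n => by positivity]
  have hcoeff := (ordinaryHypergeometricCoefficient_pos ha hb hc n).le
  have hratio : c / (c + n) ≤ 1 := div_le_one_of_le₀ (by simp) (by positivity)
  exact mul_le_mul_of_nonneg_right (mul_le_of_le_one_left hcoeff hratio) (pow_nonneg hx.1 n)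

end Positivity

section ZeroBalanced

variable {a b p x : ℝ}

theorem hasDerivAt_GaussF_add (hab : ∀ n : ℕ, a + b + n ≠ 0) (hx : |x| < 1) :
    HasDerivAt (GaussF a b (a + b)) (a * b / (a + b) * GaussF a b (a + b + 1) x / (1 - x)) x := by
  refine (differentiableAt_GaussF hx).hasDerivAt.congr_deriv ?_
  rw [eq_div_iff (by linarith [lt_of_abs_lt hx]), mul_comm, one_sub_mul_deriv_GaussF hab hx]
  ring

theorem antitoneOn_one_sub_rpow_mul_GaussF (ha : 0 < a) (hb : 0 < b) (hp : a * b / (a + b) ≤ p) :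
    AntitoneOn (fun x => (1 - x) ^ p * GaussF a b (a + b) x) (Ico 0 1) := by
  have hderiv : ∀ x ∈ Ico (0 : ℝ) 1, HasDerivAt (fun x => (1 - x) ^ p * GaussF a b (a + b) x)
      ((1 - x) ^ (p - 1) *
        (a * b / (a + b) * GaussF a b (a + b + 1) x - p * GaussF a b (a + b) x)) x := by
    intro x hx
    have hx1 : 0 < 1 - x := sub_pos.2 hx.2
    have hF := hasDerivAt_GaussF_add (a := a) (b := b) (fun n => by positivity)
      ((abs_of_nonneg hx.1).trans_lt hx.2)
    refine ((((hasDerivAt_id x).const_sub 1).rpow_const (p := p) (.inl hx1.ne')).mul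
      hF).congr_deriv ?_
    rw [id, rpow_sub_one hx1.ne']
    field_simp
    ring
  refine antitoneOn_of_hasDerivWithinAt_nonpos (convex_Ico 0 1)
    (fun x hx => (hderiv x hx).continuousAt.continuousWithinAt)
    (fun x hx => (hderiv x (interior_subset hx)).hasDerivWithinAt) fun x hx => ?_
  replace hx := interior_subset hx
  have hle : a * b / (a + b) * GaussF a b (a + b + 1) x ≤ p * GaussF a b (a + b) x :=
    mul_le_mul hp (GaussF_add_one_le ha hb (by positivity) hx)
      (GaussF_pos ha hb (by positivity) hx).le ((by positivity : 0 ≤ a * b / (a + b)).trans hp)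
  exact mul_nonpos_of_nonneg_of_nonpos (rpow_nonneg (sub_nonneg.2 hx.2.le) _) (sub_nonpos.2 hle)

end ZeroBalanced

/-- The left-hand side of Legendre's relation for `K = F(a, 1 - a; 1; ·)`. The second integral is
encoded by `F(a, 1 - a; 2; ·)`, the function whose value at `x` is the mean of `K` over `[0, x]`. -/
noncomputable def legendreSum (a x : ℝ) : ℝ :=
  GaussF a (1 - a) 1 x * ((1 - x) * GaussF a (1 - a) 2 (1 - x)) +
    x * GaussF a (1 - a) 2 x * GaussF a (1 - a) 1 (1 - x)

section Legendre

variable {a b x y : ℝ}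

theorem hasDerivAt_GaussF_one (hx : |x| < 1) :
    HasDerivAt (GaussF a (1 - a) 1) (a * (1 - a) * GaussF a (1 - a) 2 x / (1 - x)) x := by
  have h := hasDerivAt_GaussF_add (a := a) (b := 1 - a)
    (fun n => by rw [add_sub_cancel]; positivity) hx
  simpa only [add_sub_cancel, div_one, one_add_one_eq_two] using h

theorem hasDerivAt_mul_GaussF_two (hx : |x| < 1) :
    HasDerivAt (fun x => x * GaussF a b 2 x) (GaussF a b 1 x) x := by
  refine ((hasDerivAt_id x).mul (differentiableAt_GaussF hx).hasDerivAt).congr_deriv ?_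
  have h := mul_deriv_GaussF_add_one (a := a) (b := b) (c := 1) (fun n => by positivity) hx
  rw [one_add_one_eq_two] at h
  rw [id, h]
  ring

theorem hasDerivAt_legendreSum (hx : x ∈ Ioo 0 1) : HasDerivAt (legendreSum a) 0 x := by
  have hx0 : x ≠ 0 := hx.1.ne'
  have hx1 : 1 - x ≠ 0 := (sub_pos.2 hx.2).ne'
  have hx' : |x| < 1 := (abs_of_pos hx.1).trans_lt hx.2
  have hy' : |1 - x| < 1 := (abs_of_pos (sub_pos.2 hx.2)).trans_lt (sub_lt_self 1 hx.1)
  refine (((hasDerivAt_GaussF_one hx').mul ((hasDerivAt_mul_GaussF_two hy').comp_const_sub 1 x)).add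
    ((hasDerivAt_mul_GaussF_two hx').mul
      ((hasDerivAt_GaussF_one hy').comp_const_sub 1 x))).congr_deriv ?_
  rw [sub_sub_cancel]
  field_simp
  ring

theorem legendreSum_eq (hx : x ∈ Ioo 0 1) (hy : y ∈ Ioo 0 1) : legendreSum a x = legendreSum a y :=
  isOpen_Ioo.is_const_of_deriv_eq_zero isPreconnected_Ioo
    (fun _ hz => (hasDerivAt_legendreSum hz).differentiableAt.differentiableWithinAt)
    (fun _ hz => (hasDerivAt_legendreSum hz).deriv) hx hy

theorem legendreSum_pos (ha : 0 < a) (ha1 : a < 1) (hx : x ∈ Ioo 0 1) : 0 < legendreSum a x := by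
  have hx' : 1 - x ∈ Ioo 0 1 := Ioo.one_sub_mem hx
  have hF {c z : ℝ} (hc : 0 < c) (hz : z ∈ Ioo 0 1) : 0 < GaussF a (1 - a) c z :=
    GaussF_pos ha (sub_pos.2 ha1) hc (Ioo_subset_Ico_self hz)
  exact add_pos (mul_pos (hF one_pos hx) (mul_pos hx'.1 (hF two_pos hx')))
    (mul_pos (mul_pos hx.1 (hF two_pos hx)) (hF one_pos hx'))

theorem hasDerivAt_GaussF_one_sub_div (hx : x ∈ Ioo 0 1) (hF : GaussF a (1 - a) 1 x ≠ 0) :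
    HasDerivAt (fun x => GaussF a (1 - a) 1 (1 - x) / GaussF a (1 - a) 1 x)
      (-(a * (1 - a) * legendreSum a x) / (x * (1 - x) * GaussF a (1 - a) 1 x ^ 2)) x := by
  have hx0 : x ≠ 0 := hx.1.ne'
  have hx1 : 1 - x ≠ 0 := (sub_pos.2 hx.2).ne'
  have hx' : |x| < 1 := (abs_of_pos hx.1).trans_lt hx.2
  have hy' : |1 - x| < 1 := (abs_of_pos (sub_pos.2 hx.2)).trans_lt (sub_lt_self 1 hx.1)
  refine (((hasDerivAt_GaussF_one hy').comp_const_sub 1 x).div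
    (hasDerivAt_GaussF_one hx') hF).congr_deriv ?_
  rw [sub_sub_cancel, legendreSum]
  field_simp
  ring

end Legendre

section HyperbolicSecant

variable {r t x y : ℝ}

theorem exists_inv_cosh_eq (hr : r ∈ Ioo 0 1) : ∃ t, 0 < t ∧ (cosh t)⁻¹ = r := by
  have hr' : 1 < r⁻¹ := (one_lt_inv₀ hr.1).2 hr.2
  exact ⟨arcosh r⁻¹, arcosh_pos hr', by rw [cosh_arcosh hr'.le, inv_inv]⟩

theorem inv_cosh_mem_Ioo (ht : 0 < t) : (cosh t)⁻¹ ∈ Ioo 0 1 :=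
  ⟨inv_pos.2 (cosh_pos t), inv_lt_one_of_one_lt₀ (one_lt_cosh.2 ht.ne')⟩

theorem one_sub_inv_cosh_sq (t : ℝ) : 1 - (cosh t)⁻¹ ^ 2 = tanh t ^ 2 := by
  rw [tanh_eq_sinh_div_cosh]
  field_simp [(cosh_pos t).ne']
  rw [sinh_sq]

theorem sqrt_one_sub_inv_cosh_sq (ht : 0 ≤ t) : √(1 - (cosh t)⁻¹ ^ 2) = tanh t := by
  rw [one_sub_inv_cosh_sq, sqrt_sq]
  rw [tanh_eq_sinh_div_cosh]
  exact div_nonneg (sinh_nonneg_iff.2 ht) (cosh_pos t).le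

theorem two_mul_cosh_half_sq (x : ℝ) : 2 * cosh (x / 2) ^ 2 = 1 + cosh x := by
  have h := cosh_two_mul (x / 2)
  rw [mul_div_cancel₀ _ two_ne_zero, sinh_sq] at h
  linarith

theorem cosh_half_add_sq_le (x y : ℝ) : cosh ((x + y) / 2) ^ 2 ≤ cosh x * cosh y := by
  have hhalf := two_mul_cosh_half_sq (x + y)
  have hadd := cosh_add x y
  have hsub := cosh_sub x y
  linarith [one_le_cosh (x - y)]

theorem sqrt_inv_cosh_mul_le (x y : ℝ) :
    √((cosh x)⁻¹ * (cosh y)⁻¹) ≤ (cosh ((x + y) / 2))⁻¹ := by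
  rw [← mul_inv, sqrt_inv]
  exact inv_anti₀ (cosh_pos _) (le_sqrt_of_sq_le (cosh_half_add_sq_le x y))

theorem sqrt_two_mul_inv_cosh_div (hx : 0 ≤ x) (hy : 0 ≤ y) :
    √(2 * (cosh x)⁻¹ * (cosh y)⁻¹ / (1 + (cosh x)⁻¹ * (cosh y)⁻¹ +
      √(1 - (cosh x)⁻¹ ^ 2) * √(1 - (cosh y)⁻¹ ^ 2))) = (cosh ((x + y) / 2))⁻¹ := by
  have hcoshx := (cosh_pos x).ne'
  have hcoshy := (cosh_pos y).ne'
  have hmid := cosh_pos ((x + y) / 2)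
  have hden : 1 + (cosh x)⁻¹ * (cosh y)⁻¹ + tanh x * tanh y =
      2 * cosh ((x + y) / 2) ^ 2 / (cosh x * cosh y) := by
    rw [two_mul_cosh_half_sq, cosh_add, tanh_eq_sinh_div_cosh, tanh_eq_sinh_div_cosh]
    field_simp
    ring
  rw [sqrt_one_sub_inv_cosh_sq hx, sqrt_one_sub_inv_cosh_sq hy, hden,
    ← sqrt_sq (inv_nonneg.2 hmid.le)]
  congr 1
  field_simp

end HyperbolicSecant

section GrotzschModulus

variable {a x y : ℝ}

theorem sq_mem_Ioo_zero_one {r : ℝ} (hr : r ∈ Ioo 0 1) : r ^ 2 ∈ Ioo 0 1 :=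
  ⟨pow_pos hr.1 2, pow_lt_one₀ hr.1.le hr.2 two_ne_zero⟩

-- In fact `C = 1`, by Gauss's evaluation of `F(a, 1 - a; 2; 1)`; only its sign matters here.
theorem exists_hasDerivAt_muA (ha : 0 < a) (ha1 : a < 1) :
    ∃ C, 0 ≤ C ∧ ∀ r ∈ Ioo (0 : ℝ) 1,
      HasDerivAt (muA a) (-C / (r * (1 - r ^ 2) * GaussF a (1 - a) 1 (r ^ 2) ^ 2)) r := by
  have hsin : 0 < sin (π * a) := sin_pos_of_pos_of_lt_pi (by positivity) (by nlinarith [pi_pos])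
  have hL := legendreSum_pos (x := 1 / 2) ha ha1 (by norm_num)
  have ha' : 0 < 1 - a := sub_pos.2 ha1
  refine ⟨π / sin (π * a) * (a * (1 - a) * legendreSum a (1 / 2)), by positivity, fun r hr => ?_⟩
  have hr2 : r ^ 2 ∈ Ioo 0 1 := sq_mem_Ioo_zero_one hr
  have hr2' : 1 - r ^ 2 ≠ 0 := (sub_pos.2 hr2.2).ne'
  have hF := (GaussF_pos ha ha' one_pos (Ioo_subset_Ico_self hr2)).ne'
  have hmuA : muA a = fun r => π / (2 * sin (π * a)) *
      (GaussF a (1 - a) 1 (1 - r ^ 2) / GaussF a (1 - a) 1 (r ^ 2)) :=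
    funext fun _ => mul_div_assoc _ _ _
  rw [hmuA]
  refine (((hasDerivAt_GaussF_one_sub_div hr2 hF).comp (h := fun r => r ^ 2) r
    (hasDerivAt_pow 2 r)).const_mul _).congr_deriv ?_
  have hr0 := hr.1.ne'
  rw [legendreSum_eq hr2 (by norm_num : (1 / 2 : ℝ) ∈ Ioo 0 1)]
  field_simp
  norm_num

theorem antitoneOn_muA (ha : 0 < a) (ha1 : a < 1) : AntitoneOn (muA a) (Ioo 0 1) := by
  obtain ⟨C, hC, hderiv⟩ := exists_hasDerivAt_muA ha ha1
  refine antitoneOn_of_hasDerivWithinAt_nonpos (convex_Ioo 0 1)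
    (fun r hr => (hderiv r hr).continuousAt.continuousWithinAt)
    (fun r hr => (hderiv r (interior_subset hr)).hasDerivWithinAt) fun r hr => ?_
  replace hr := interior_subset hr
  have hr2 : 0 ≤ 1 - r ^ 2 := sub_nonneg.2 (pow_le_one₀ hr.1.le hr.2.le)
  exact div_nonpos_of_nonpos_of_nonneg (neg_nonpos.2 hC)
    (mul_nonneg (mul_nonneg hr.1.le hr2) (sq_nonneg _))

theorem antitoneOn_sqrt_one_sub_mul_GaussF_sq (ha : 0 < a) (ha1 : a < 1) :
    AntitoneOn (fun x => √(1 - x) * GaussF a (1 - a) 1 x ^ 2) (Ico 0 1) := by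
  have ha' : 0 < 1 - a := sub_pos.2 ha1
  have hquarter : a * (1 - a) / (a + (1 - a)) ≤ 1 / 4 := by
    rw [add_sub_cancel]
    nlinarith [sq_nonneg (2 * a - 1)]
  have h := antitoneOn_one_sub_rpow_mul_GaussF ha ha' hquarter
  rw [add_sub_cancel] at h
  intro x hx y hy hxy
  have hsq {z : ℝ} (hz : z ∈ Ico 0 1) : √(1 - z) * GaussF a (1 - a) 1 z ^ 2 =
      ((1 - z) ^ (1 / 4 : ℝ) * GaussF a (1 - a) 1 z) ^ 2 := by
    rw [mul_pow, ← rpow_mul_natCast (sub_nonneg.2 hz.2.le), sqrt_eq_rpow]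
    norm_num
  have hpos := mul_nonneg (rpow_nonneg (sub_nonneg.2 hy.2.le) (1 / 4))
    (GaussF_pos ha ha' one_pos hy).le
  simp only [hsq hx, hsq hy]
  exact pow_le_pow_left₀ hpos (h hx hy hxy) 2

theorem concaveOn_muA_inv_cosh (ha : 0 < a) (ha1 : a < 1) :
    ConcaveOn ℝ (Ioi 0) fun t => muA a (cosh t)⁻¹ := by
  obtain ⟨C, hC, hmuA⟩ := exists_hasDerivAt_muA ha ha1
  have hderiv : ∀ t ∈ Ioi (0 : ℝ), HasDerivAt (fun t => muA a (cosh t)⁻¹)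
      (C / (√(1 - (cosh t)⁻¹ ^ 2) * GaussF a (1 - a) 1 ((cosh t)⁻¹ ^ 2) ^ 2)) t := by
    intro t ht
    have hsinh : sinh t ≠ 0 := (sinh_pos_iff.2 ht).ne'
    have hcosh : cosh t ≠ 0 := (cosh_pos t).ne'
    refine ((hmuA _ (inv_cosh_mem_Ioo ht)).comp t
      ((hasDerivAt_cosh t).inv hcosh)).congr_deriv ?_
    rw [sqrt_one_sub_inv_cosh_sq (le_of_lt ht), one_sub_inv_cosh_sq, tanh_eq_sinh_div_cosh]
    generalize GaussF a (1 - a) 1 ((cosh t)⁻¹ ^ 2) = K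
    field_simp
  have hsech {t : ℝ} (ht : t ∈ Ioi 0) : (cosh t)⁻¹ ^ 2 ∈ Ioo 0 1 :=
    sq_mem_Ioo_zero_one (inv_cosh_mem_Ioo ht)
  refine AntitoneOn.concaveOn_of_deriv (convex_Ioi 0)
    (fun t ht => (hderiv t ht).continuousAt.continuousWithinAt) ?_ ?_ <;> rw [interior_Ioi]
  · exact fun t ht => (hderiv t ht).differentiableAt.differentiableWithinAt
  intro t ht u hu htu
  rw [(hderiv t ht).deriv, (hderiv u hu).deriv]
  have hcosh : cosh t ≤ cosh u := cosh_strictMonoOn.monotoneOn (Ioi_subset_Ici_self ht)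
    (Ioi_subset_Ici_self hu) htu
  have hle : (cosh u)⁻¹ ^ 2 ≤ (cosh t)⁻¹ ^ 2 := by gcongr
  have hF := GaussF_pos ha (sub_pos.2 ha1) one_pos (Ioo_subset_Ico_self (hsech ht))
  have hsqrt := sqrt_pos.2 (sub_pos.2 (hsech ht).2)
  exact div_le_div_of_nonneg_left hC (by positivity)
    (antitoneOn_sqrt_one_sub_mul_GaussF_sq ha ha1 (Ioo_subset_Ico_self (hsech hu))
      (Ioo_subset_Ico_self (hsech ht)) hle)

theorem muA_inv_cosh_add_le (ha : 0 < a) (ha1 : a < 1) (hx : 0 < x) (hy : 0 < y) :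
    muA a (cosh x)⁻¹ + muA a (cosh y)⁻¹ ≤ 2 * muA a (cosh ((x + y) / 2))⁻¹ := by
  have h := (concaveOn_muA_inv_cosh ha ha1).2 hx hy (one_half_pos (α := ℝ)).le
    (one_half_pos (α := ℝ)).le (add_halves 1)
  rw [smul_eq_mul, smul_eq_mul, smul_eq_mul, smul_eq_mul, ← mul_add, ← mul_add,
    one_div_mul_eq_div, one_div_mul_eq_div] at h
  linarith

end GrotzschModulus

theorem muA_sum_le_general (a : ℝ) (ha : 0 < a) (ha1 : a < 1) (r s : ℝ) (hr : r ∈ Ioo 0 1)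
    (hs : s ∈ Ioo 0 1) :
    (muA a r + muA a s ≤
      2 * muA a √(2 * r * s / (1 + r * s + √(1 - r ^ 2) * √(1 - s ^ 2))) ∧
     2 * muA a √(2 * r * s / (1 + r * s + √(1 - r ^ 2) * √(1 - s ^ 2))) ≤
      2 * muA a √(r * s)) ∧
    (r = s →
      muA a r + muA a s =
        2 * muA a √(2 * r * s / (1 + r * s + √(1 - r ^ 2) * √(1 - s ^ 2))) ∧
      2 * muA a √(2 * r * s / (1 + r * s + √(1 - r ^ 2) * √(1 - s ^ 2))) =
        2 * muA a √(r * s)) := by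
  obtain ⟨x, hx, rfl⟩ := exists_inv_cosh_eq hr
  obtain ⟨y, hy, rfl⟩ := exists_inv_cosh_eq hs
  refine ⟨⟨?_, ?_⟩, fun hrs => ?_⟩
  · rw [sqrt_two_mul_inv_cosh_div hx.le hy.le]
    exact muA_inv_cosh_add_le ha ha1 hx hy
  · rw [sqrt_two_mul_inv_cosh_div hx.le hy.le]
    have hle := sqrt_inv_cosh_mul_le x y
    have hmean := inv_cosh_mem_Ioo (half_pos (add_pos hx hy))
    have hpos := sqrt_pos.2 (mul_pos hr.1 hs.1)
    exact mul_le_mul_of_nonneg_left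
      (antitoneOn_muA ha ha1 ⟨hpos, hle.trans_lt hmean.2⟩ hmean hle) zero_le_two
  · rw [← hrs, sqrt_two_mul_inv_cosh_div hx.le hx.le, add_self_div_two, sqrt_mul_self hr.1.le]
    exact ⟨(two_mul _).symm, rfl⟩

theorem muA_sum_le (a : ℝ) (ha : 0 < a) (ha2 : a ≤ 1/2)
    (r s : ℝ) (hr : r ∈ Set.Ioo (0:ℝ) 1) (hs : s ∈ Set.Ioo (0:ℝ) 1) :
    (muA a r + muA a s ≤
      2 * muA a (Real.sqrt (2*r*s / (1 + r*s + Real.sqrt (1-r^2) * Real.sqrt (1-s^2)))) ∧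
     2 * muA a (Real.sqrt (2*r*s / (1 + r*s + Real.sqrt (1-r^2) * Real.sqrt (1-s^2)))) ≤
      2 * muA a (Real.sqrt (r*s))) ∧
    (r = s →
      muA a r + muA a s =
        2 * muA a (Real.sqrt (2*r*s / (1 + r*s + Real.sqrt (1-r^2) * Real.sqrt (1-s^2)))) ∧
      2 * muA a (Real.sqrt (2*r*s / (1 + r*s + Real.sqrt (1-r^2) * Real.sqrt (1-s^2)))) =
        2 * muA a (Real.sqrt (r*s))) :=
  muA_sum_le_general a ha (by linarith) r s hr hs
end
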